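/- Let f : ℂ → ℂ be an entire function (holomorphic on all of ℂ). Then f is a non-constant polynomial if and only if dim_N f(X) = dim_N X for every subset X ⊆ ℂ (with the Euclidean metric). -/

import Mathlib

open Set Metric

/-- `S` is `D`-bounded with respect to the distance function `d`:
every two points of `S` are at distance at most `D`. -/
def IsBoundedBy {α : Type*} (d : α → α → ℝ) (S : Set α) (D : ℝ) : Prop :=
  ∀ x ∈ S, ∀ y ∈ S, d x y ≤ D

/-- The Nagata (Assouad–Nagata) dimension of the set `X ⊆ α` with respect to the
distance function `d`, as an element of `ℕ∞`: the infimum of all `n : ℕ` such that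
there is a constant `c > 0` so that for every `s > 0` the set `X` admits a cover by
subsets of diameter at most `c * s` such that every subset of `X` of diameter at
most `s` meets at most `n + 1` members of the cover. -/
noncomputable def nagataDimWith {α : Type*} (d : α → α → ℝ) (X : Set α) : ℕ∞ :=
  sInf {N : ℕ∞ | ∃ n : ℕ, N = (n : ℕ∞) ∧ ∃ c : ℝ, 0 < c ∧ ∀ s : ℝ, 0 < s →
    ∃ B : Set (Set α), (∀ b ∈ B, b ⊆ X) ∧ X ⊆ ⋃₀ B ∧
      (∀ b ∈ B, IsBoundedBy d b (c * s)) ∧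
      ∀ T ⊆ X, IsBoundedBy d T s → {b ∈ B | (T ∩ b).Nonempty}.encard ≤ (n : ℕ∞) + 1}

/-- The Nagata dimension of a subset of a metric space. -/
noncomputable def nagataDim {α : Type*} [PseudoMetricSpace α] (X : Set α) : ℕ∞ :=
  nagataDimWith dist X

/-!
A set has Nagata dimension at most `n` iff at every scale `s` it can be colored with `n + 1` colors
so that each color class splits into pieces of diameter `O(s)` at mutual distance more than `s`.
Merging such colorings shows that the dimension of a finite union is the maximum of the dimensions.

Near every point `z₀`, and near `∞` with `z₀ = 0`, a non-constant polynomial `f` looks like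
`a * (z - z₀) ^ (k + 1)`, so on narrow sectors `|f z - f w|` is comparable to
`|z - w| * max |z - z₀| |w - z₀| ^ k`. Hence `f` is a similarity up to a bounded factor on each
dyadic annulus. If only every other annulus is kept, the annuli and also their images are far apart
compared with their sizes, and colorings can be transferred annulus by annulus. By compactness,
finitely many such pieces cover the plane.

Conversely, a constant collapses `ℂ`, and an entire function that is not a polynomial has an
essential singularity at `∞`. By the Casorati–Weierstrass theorem there are `z n` with
`2 * |z n| ≤ |z (n + 1)|` whose images are dense: the set of all `z n` has dimension zero, whereas a
dense subset of `ℂ` has not.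
-/

open Filter Asymptotics Bornology
open scoped Topology Polynomial

section Colorings

variable {α β ι : Type*}

/-- A coloring `κ` of `X` all of whose color classes are cut, by the equivalence relation `r`, into
pieces which have diameter at most `D` and are pairwise at distance more than `s`. -/
structure IsSeparatedColoring (d : α → α → ℝ) (X : Set α) (κ : α → ι) (r : Setoid α)
    (s D : ℝ) : Prop where
  rel_of_le : ∀ x ∈ X, ∀ y ∈ X, κ x = κ y → d x y ≤ s → r x y
  le_of_rel : ∀ x ∈ X, ∀ y ∈ X, r x y → d x y ≤ D

/-- The existence, with a constant independent of the scale, of the covers in the definition of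
`nagataDimWith`. -/
def HasNagataCover (n : ℕ) (d : α → α → ℝ) (X : Set α) : Prop :=
  ∃ c : ℝ, 0 < c ∧ ∀ s : ℝ, 0 < s →
    ∃ B : Set (Set α), (∀ b ∈ B, b ⊆ X) ∧ X ⊆ ⋃₀ B ∧
      (∀ b ∈ B, IsBoundedBy d b (c * s)) ∧
      ∀ T ⊆ X, IsBoundedBy d T s → {b ∈ B | (T ∩ b).Nonempty}.encard ≤ (n : ℕ∞) + 1

/-- The existence, with a constant independent of the scale, of separated colorings in `n + 1`
colors; for a pseudometric this characterizes Nagata dimension at most `n`. -/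
def HasNagataColoring (n : ℕ) (d : α → α → ℝ) (X : Set α) : Prop :=
  ∃ c : ℝ, 0 < c ∧ ∀ s : ℝ, 0 < s →
    ∃ (κ : α → Fin (n + 1)) (r : Setoid α), IsSeparatedColoring d X κ r s (c * s)

theorem IsSeparatedColoring.mono {d : α → α → ℝ} {X Y : Set α} {κ : α → ι} {r : Setoid α}
    {s D : ℝ} (h : IsSeparatedColoring d Y κ r s D) (hXY : X ⊆ Y) :
    IsSeparatedColoring d X κ r s D where
  rel_of_le x hx y hy := h.rel_of_le x (hXY hx) y (hXY hy)
  le_of_rel x hx y hy := h.le_of_rel x (hXY hx) y (hXY hy)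

theorem IsSeparatedColoring.congr {d : α → α → ℝ} {X : Set α} {κ κ' : α → ι} {r : Setoid α}
    {s D : ℝ} (h : IsSeparatedColoring d X κ r s D) (hκ : EqOn κ κ' X) :
    IsSeparatedColoring d X κ' r s D where
  rel_of_le x hx y hy hxy := h.rel_of_le x hx y hy (by rwa [hκ hx, hκ hy])
  le_of_rel := h.le_of_rel

theorem HasNagataColoring.mono {n : ℕ} {d : α → α → ℝ} {X Y : Set α}
    (h : HasNagataColoring n d Y) (hXY : X ⊆ Y) : HasNagataColoring n d X := by
  obtain ⟨c, hc, h⟩ := h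
  refine ⟨c, hc, fun s hs => ?_⟩
  obtain ⟨κ, r, hκ⟩ := h s hs
  exact ⟨κ, r, hκ.mono hXY⟩

theorem HasNagataCover.mono_dim {m n : ℕ} {d : α → α → ℝ} {X : Set α}
    (h : HasNagataCover m d X) (hmn : m ≤ n) : HasNagataCover n d X := by
  obtain ⟨c, hc, h⟩ := h
  refine ⟨c, hc, fun s hs => ?_⟩
  obtain ⟨B, hBX, hXB, hBd, hBm⟩ := h s hs
  exact ⟨B, hBX, hXB, hBd, fun T hT hTs => (hBm T hT hTs).trans (by gcongr)⟩

theorem hasNagataColoring_image_iff {n : ℕ} (d : β → β → ℝ) (f : α → β) (X : Set α) :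
    HasNagataColoring n d (f '' X) ↔ HasNagataColoring n (fun x y => d (f x) (f y)) X := by
  constructor
  · rintro ⟨c, hc, h⟩
    refine ⟨c, hc, fun s hs => ?_⟩
    obtain ⟨κ, r, hκ⟩ := h s hs
    exact ⟨κ ∘ f, r.comap f,
      fun x hx y hy => hκ.rel_of_le _ (mem_image_of_mem f hx) _ (mem_image_of_mem f hy),
      fun x hx y hy => hκ.le_of_rel _ (mem_image_of_mem f hx) _ (mem_image_of_mem f hy)⟩
  · rintro ⟨c, hc, h⟩
    rcases X.eq_empty_or_nonempty with rfl | ⟨x₀, -⟩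
    · rw [image_empty]
      exact ⟨c, hc, fun s _ => ⟨fun _ => 0, ⊤, by simp, by simp⟩⟩
    have : Nonempty α := ⟨x₀⟩
    choose! g hgX hfg using fun y (hy : y ∈ f '' X) => hy
    refine ⟨c, hc, fun s hs => ?_⟩
    obtain ⟨κ, r, hκ⟩ := h s hs
    refine ⟨κ ∘ g, r.comap g, fun x hx y hy hxy hd => ?_, fun x hx y hy hxy => ?_⟩
    · exact hκ.rel_of_le _ (hgX x hx) _ (hgX y hy) hxy (by rwa [hfg x hx, hfg y hy])
    · have hd := hκ.le_of_rel _ (hgX x hx) _ (hgX y hy) hxy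
      rwa [hfg x hx, hfg y hy] at hd

/-- The pieces of a separated coloring form a cover, and a set of diameter at most `s` meets at
most one piece of each color. -/
theorem HasNagataColoring.hasNagataCover {n : ℕ} {d : α → α → ℝ} {X : Set α}
    (h : HasNagataColoring n d X) : HasNagataCover n d X := by
  obtain ⟨c, hc, h⟩ := h
  refine ⟨c, hc, fun s hs => ?_⟩
  obtain ⟨κ, r, hκ⟩ := h s hs
  let piece (x : α) : Set α := {y ∈ X | κ x = κ y ∧ r x y}
  refine ⟨piece '' X, ?_, fun x hx => ?_, ?_, fun T hTX hTs => ?_⟩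
  · rintro _ ⟨x, -, rfl⟩
    exact sep_subset _ _
  · exact ⟨piece x, mem_image_of_mem _ hx, hx, rfl, r.refl x⟩
  · rintro _ ⟨x, -, rfl⟩ y ⟨hy, -, hxy⟩ z ⟨hz, -, hxz⟩
    exact hκ.le_of_rel y hy z hz (r.trans (r.symm hxy) hxz)
  let pieceOfColor (k : Fin (n + 1)) : Set α := {y ∈ X | k = κ y ∧ ∃ t ∈ T, k = κ t ∧ r t y}
  have hsub : {b ∈ piece '' X | (T ∩ b).Nonempty} ⊆ range pieceOfColor := by
    rintro _ ⟨⟨x, -, rfl⟩, t, ht, htX, hxt, hrxt⟩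
    refine ⟨κ x, Set.ext fun y => and_congr_right fun _ => and_congr_right fun _ => ?_⟩
    refine ⟨fun ⟨t', ht', hxt', hrt'y⟩ => ?_, fun hrxy => ⟨t, ht, hxt, r.trans (r.symm hrxt) hrxy⟩⟩
    have hrtt' : r t t' :=
      hκ.rel_of_le t htX t' (hTX ht') (hxt.symm.trans hxt') (hTs t ht t' ht')
    exact r.trans hrxt (r.trans hrtt' hrt'y)
  calc {b ∈ piece '' X | (T ∩ b).Nonempty}.encard
      ≤ (range pieceOfColor).encard := encard_le_encard hsub
    _ ≤ (univ : Set (Fin (n + 1))).encard := by rw [← image_univ]; exact encard_image_le _ _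
    _ = n + 1 := by simp

end Colorings

section CoverToColoring

variable {α ι : Type*}

theorem exists_gap (G : Finset ι) (g : ι → ℝ) {s : ℝ} (hs : 0 < s) :
    ∃ t, s ≤ t ∧ t ≤ (G.card + 1) * s ∧ ∀ b ∈ G, g b < t ∨ t + s ≤ g b := by
  classical
  obtain ⟨j, hj, hjG⟩ := Finset.exists_mem_notMem_of_card_lt_card
    (s := G.image fun b => ⌊g b / s⌋₊) (t := Finset.Icc 1 (G.card + 1))
    (Finset.card_image_le.trans_lt (by simp))
  obtain ⟨hj1, hjn⟩ := Finset.mem_Icc.1 hj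
  have hj1' : (1 : ℝ) ≤ j := mod_cast hj1
  have hjn' : (j : ℝ) ≤ G.card + 1 := mod_cast hjn
  refine ⟨j * s, le_mul_of_one_le_left hs.le hj1', by gcongr, fun b hb => ?_⟩
  by_contra! hbj
  refine hjG (Finset.mem_image.2 ⟨b, hb, (Nat.floor_eq_iff' (by omega)).2 ?_⟩)
  rw [le_div_iff₀ hs, div_lt_iff₀ hs]
  exact ⟨hbj.1, by linarith [hbj.2]⟩

variable [PseudoMetricSpace α] {B : Set (Set α)} {s r : ℝ} {n : ℕ} {x y : α}
  {F F' : Finset (Set α)}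

/-- `F` consists of the nonempty members of `B` nearest to `x`: all of them are at distance less
than `r` from `x`, and all others are farther away by more than `s`. -/
structure IsGapFamily (B : Set (Set α)) (s r : ℝ) (x : α) (F : Finset (Set α)) : Prop where
  nonempty : F.Nonempty
  mem : ∀ b ∈ F, b ∈ B ∧ b.Nonempty
  infDist_lt : ∀ b ∈ F, infDist x b < r
  gap : ∀ b ∈ F, ∀ b' ∈ B, b'.Nonempty → b' ∉ F → infDist x b + s < infDist x b'

theorem IsGapFamily.subset_of_dist_le_of_not_subset (hF : IsGapFamily B s r x F)
    (hF' : IsGapFamily B s r y F') (hxy : dist x y ≤ s) (hsub : ¬ F ⊆ F') : F' ⊆ F := by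
  obtain ⟨b, hb, hbF'⟩ := Finset.not_subset.1 hsub
  intro b' hb'
  by_contra hbF
  have hx := hF.gap b hb b' (hF'.mem b' hb').1 (hF'.mem b' hb').2 hbF
  have hy := hF'.gap b' hb' b (hF.mem b hb).1 (hF.mem b hb).2 hbF'
  have hx' : infDist x b' ≤ infDist y b' + dist x y := infDist_le_infDist_add_dist
  have hy' : infDist y b ≤ infDist x b + dist x y := dist_comm x y ▸ infDist_le_infDist_add_dist
  linarith

theorem IsGapFamily.eq_of_card_eq (hF : IsGapFamily B s r x F) (hF' : IsGapFamily B s r y F')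
    (hxy : dist x y ≤ s) (hcard : F.card = F'.card) : F = F' := by
  by_cases hsub : F ⊆ F'
  · exact Finset.eq_of_subset_of_card_le hsub hcard.ge
  · exact (Finset.eq_of_subset_of_card_le
      (hF.subset_of_dist_le_of_not_subset hF' hxy hsub) hcard.le).symm

theorem IsGapFamily.dist_le {D : ℝ} (hB : ∀ b ∈ B, IsBoundedBy dist b D)
    (hF : IsGapFamily B s r x F) (hF' : IsGapFamily B s r y F) : dist x y ≤ r + D + r := by
  obtain ⟨b, hb⟩ := hF.nonempty
  obtain ⟨hbB, hbne⟩ := hF.mem b hb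
  obtain ⟨u, hu, hxu⟩ := (infDist_lt_iff hbne).1 (hF.infDist_lt b hb)
  obtain ⟨v, hv, hyv⟩ := (infDist_lt_iff hbne).1 (hF'.infDist_lt b hb)
  have huv := hB b hbB u hu v hv
  have hxy := dist_triangle4 x u v y
  rw [dist_comm v y] at hxy
  linarith

theorem exists_finset_infDist_lt {X : Set α} (hBX : ∀ b ∈ B, b ⊆ X)
    (hmult : ∀ T ⊆ X, IsBoundedBy dist T (2 * r) →
      {b ∈ B | (T ∩ b).Nonempty}.encard ≤ (n : ℕ∞) + 1) (x : α) :
    ∃ G : Finset (Set α), G.card ≤ n + 1 ∧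
      ∀ b, b ∈ G ↔ b ∈ B ∧ b.Nonempty ∧ infDist x b < r := by
  let G : Set (Set α) := {b | b ∈ B ∧ b.Nonempty ∧ infDist x b < r}
  have hsub : G ⊆ {b ∈ B | (X ∩ ball x r ∩ b).Nonempty} := by
    rintro b ⟨hb, hne, hlt⟩
    obtain ⟨y, hy, hxy⟩ := (infDist_lt_iff hne).1 hlt
    exact ⟨hb, y, ⟨hBX b hb hy, mem_ball'.2 hxy⟩, hy⟩
  have hball : IsBoundedBy dist (X ∩ ball x r) (2 * r) := by
    rintro y ⟨-, hy⟩ z ⟨-, hz⟩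
    linarith [dist_triangle_right y z x, mem_ball.1 hy, mem_ball.1 hz]
  have hG : G.encard ≤ ((n + 1 : ℕ) : ℕ∞) :=
    (encard_le_encard hsub).trans (mod_cast hmult _ inter_subset_left hball)
  have hfin : G.Finite := finite_of_encard_le_coe hG
  refine ⟨hfin.toFinset, ?_, fun b => hfin.mem_toFinset⟩
  rwa [hfin.encard_eq_coe_toFinset_card, Nat.cast_le] at hG

theorem exists_isGapFamily {X : Set α} (hs : 0 < s) (hr : (n + 3) * s ≤ r)
    (hBX : ∀ b ∈ B, b ⊆ X)
    (hmult : ∀ T ⊆ X, IsBoundedBy dist T (2 * r) →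
      {b ∈ B | (T ∩ b).Nonempty}.encard ≤ (n : ℕ∞) + 1) (hx : x ∈ ⋃₀ B) :
    ∃ F, F.card ≤ n + 1 ∧ IsGapFamily B s r x F := by
  classical
  obtain ⟨G, hGcard, hG⟩ := exists_finset_infDist_lt hBX hmult x
  obtain ⟨t, hst, htG, hgap⟩ := exists_gap G (infDist x) hs
  have hGcard' : (G.card : ℝ) ≤ n + 1 := mod_cast hGcard
  have htr : t + s ≤ r := by nlinarith
  obtain ⟨b₀, hb₀, hxb₀⟩ := hx
  have hb₀t : infDist x b₀ < t := by rw [infDist_zero_of_mem hxb₀]; linarith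
  refine ⟨{b ∈ G | infDist x b < t}, (Finset.card_filter_le _ _).trans hGcard, ⟨b₀, ?_⟩,
    fun b hb => ?_, fun b hb => ?_, fun b hb b' hb'B hb'ne hb' => ?_⟩
  · exact Finset.mem_filter.2 ⟨(hG b₀).2 ⟨hb₀, ⟨x, hxb₀⟩, by linarith⟩, hb₀t⟩
  · have hbG := (hG b).1 (Finset.mem_filter.1 hb).1
    exact ⟨hbG.1, hbG.2.1⟩
  · exact ((hG b).1 (Finset.mem_filter.1 hb).1).2.2
  · have hbt := (Finset.mem_filter.1 hb).2
    suffices t + s ≤ infDist x b' by linarith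
    by_cases hb'G : b' ∈ G
    · exact (hgap b' hb'G).resolve_left fun h => hb' (Finset.mem_filter.2 ⟨hb'G, h⟩)
    · exact htr.trans (not_lt.1 fun h => hb'G ((hG b').2 ⟨hb'B, hb'ne, h⟩))

/-- Label each point by a gap family and color it by the size of its label: two nearby points with
labels of the same size have the same label. -/
theorem HasNagataCover.hasNagataColoring {X : Set α} (h : HasNagataCover n dist X) :
    HasNagataColoring n dist X := by
  obtain ⟨c, hc, h⟩ := h
  refine ⟨(2 + 2 * c) * (n + 3), by positivity, fun s hs => ?_⟩
  obtain ⟨B, hBX, hXB, hBd, hBm⟩ := h (2 * ((n + 3) * s)) (by positivity)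
  choose! F hFcard hF using fun x (hx : x ∈ X) =>
    exists_isGapFamily hs le_rfl hBX hBm (hXB hx)
  refine ⟨fun x => Fin.ofNat (n + 1) ((F x).card - 1), Setoid.ker F, fun x hx y hy hxy hd => ?_,
    fun x hx y hy hxy => ?_⟩
  · have hFx := (hF x hx).nonempty.card_pos
    have hFy := (hF y hy).nonempty.card_pos
    have hcard := congrArg Fin.val hxy
    simp only [Fin.val_ofNat] at hcard
    rw [Nat.mod_eq_of_lt (by have := hFcard x hx; omega),
      Nat.mod_eq_of_lt (by have := hFcard y hy; omega)] at hcard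
    exact (hF x hx).eq_of_card_eq (hF y hy) hd (by omega)
  · rw [Setoid.ker_def] at hxy
    linarith [(hF x hx).dist_le hBd (hxy ▸ hF y hy)]

end CoverToColoring

section NagataDim

variable {α : Type*} [PseudoMetricSpace α] {A B X Y : Set α}

theorem nagataDim_le_iff {n : ℕ} : nagataDim X ≤ n ↔ HasNagataColoring n dist X := by
  constructor
  · intro h
    obtain ⟨_, ⟨m, rfl, hm⟩, hmn⟩ := sInf_lt_iff.1 (ENat.lt_add_one_iff (by simp) |>.2 h)
    have hmn' : m ≤ n := Nat.lt_succ_iff.1 (mod_cast hmn)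
    exact (HasNagataCover.mono_dim hm hmn').hasNagataColoring
  · exact fun h => sInf_le ⟨n, rfl, h.hasNagataCover⟩

theorem nagataDim_eq_nagataDim_iff {β : Type*} [PseudoMetricSpace β] {Y : Set β} :
    nagataDim X = nagataDim Y ↔
      ∀ n : ℕ, HasNagataColoring n dist X ↔ HasNagataColoring n dist Y := by
  simp only [← nagataDim_le_iff]
  refine ⟨fun h n => by rw [h], fun h => eq_of_forall_ge_iff fun N => ?_⟩
  induction N using ENat.recTopCoe with
  | top => simp
  | coe n => exact h n

theorem nagataDim_mono (h : X ⊆ Y) : nagataDim X ≤ nagataDim Y := by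
  refine le_of_forall_ge fun N hN => ?_
  induction N using ENat.recTopCoe with
  | top => exact le_top
  | coe n => exact nagataDim_le_iff.2 ((nagataDim_le_iff.1 hN).mono h)

theorem nagataDim_eq_zero_of_subsingleton (h : X.Subsingleton) : nagataDim X = 0 := by
  refine nonpos_iff_eq_zero.1 (nagataDim_le_iff (n := 0) |>.2 ⟨1, one_pos, fun s hs => ?_⟩)
  refine ⟨fun _ => 0, ⊤, fun x _ y _ _ _ => trivial, fun x hx y hy _ => ?_⟩
  rw [h hx hy, dist_self]
  positivity

section Union

variable {ι : Type*} {κ : α → ι} {r r' : Setoid α} {s D D' : ℝ} {x y b b' : α}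

/-- The piece of `x` is to be merged with the piece of `b ∈ B`, which has the same color, either
because `x = b` or because the piece of `x` in `A` comes within `s` of `b`. -/
structure IsAnchor (A B : Set α) (κ : α → ι) (r : Setoid α) (s : ℝ) (x b : α) : Prop where
  mem : b ∈ B
  color_eq : κ x = κ b
  eq_or_near : x = b ∨ x ∈ A ∧ ∃ a ∈ A, r a x ∧ dist a b ≤ s

theorem isAnchor_self (hx : x ∈ B) : IsAnchor A B κ r s x x := ⟨hx, rfl, .inl rfl⟩

theorem IsAnchor.dist_le (hA : IsSeparatedColoring dist A κ r s D) (hDs : 0 ≤ D + s)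
    (h : IsAnchor A B κ r s x b) : dist x b ≤ D + s := by
  rcases h.eq_or_near with rfl | ⟨hx, a, ha, hax, hab⟩
  · rwa [dist_self]
  · linarith [dist_triangle x a b, hA.le_of_rel x hx a ha (r.symm hax)]

theorem IsAnchor.rel (hA : IsSeparatedColoring dist A κ r s D)
    (hB : IsSeparatedColoring dist B κ r' (2 * (D + s)) D') (hDs : 0 ≤ D + s)
    (h : IsAnchor A B κ r s x b) (h' : IsAnchor A B κ r s x b') : r' b b' :=
  hB.rel_of_le b h.mem b' h'.mem (h.color_eq.symm.trans h'.color_eq) (by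
    linarith [dist_triangle_left b b' x, h.dist_le hA hDs, h'.dist_le hA hDs])

theorem IsAnchor.exists_of_dist_le (hA : IsSeparatedColoring dist A κ r s D)
    (h : IsAnchor A B κ r s x b) (hy : y ∈ A) (hxy : κ x = κ y) (hd : dist x y ≤ s) :
    ∃ b', IsAnchor A B κ r s x b' ∧ IsAnchor A B κ r s y b' := by
  rcases h.eq_or_near with rfl | ⟨hx, a, ha, hax, hab⟩
  · exact ⟨x, h, h.mem, hxy.symm, .inr ⟨hy, y, hy, r.refl y, dist_comm x y ▸ hd⟩⟩
  · exact ⟨b, h, h.mem, hxy ▸ h.color_eq,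
      .inr ⟨hy, a, ha, r.trans hax (hA.rel_of_le x hx y hy hxy hd), hab⟩⟩

open Classical in
/-- The pieces of the union of two separated colorings: points with an anchor are labelled by its
`r'`-class, the others by their `r`-class. -/
noncomputable def mergeLabel (A B : Set α) (κ : α → ι) (r r' : Setoid α) (s : ℝ) (x : α) :
    Quotient r' ⊕ Quotient r :=
  if h : ∃ b, IsAnchor A B κ r s x b then .inl (Quotient.mk r' h.choose)
  else .inr (Quotient.mk r x)

theorem IsAnchor.mergeLabel_eq (hA : IsSeparatedColoring dist A κ r s D)
    (hB : IsSeparatedColoring dist B κ r' (2 * (D + s)) D') (hDs : 0 ≤ D + s)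
    (h : IsAnchor A B κ r s x b) : mergeLabel A B κ r r' s x = .inl (Quotient.mk r' b) := by
  have hex : ∃ b, IsAnchor A B κ r s x b := ⟨b, h⟩
  rw [mergeLabel, dif_pos hex]
  exact congrArg _ (Quotient.sound (hex.choose_spec.rel hA hB hDs h))

theorem mergeLabel_of_not_isAnchor (h : ∀ b, ¬ IsAnchor A B κ r s x b) :
    mergeLabel A B κ r r' s x = .inr (Quotient.mk r x) :=
  dif_neg (not_exists.2 h)

theorem mergeLabel_eq_of_dist_le (hA : IsSeparatedColoring dist A κ r s D)
    (hB : IsSeparatedColoring dist B κ r' (2 * (D + s)) D') (hs : 0 ≤ s) (hD : 0 ≤ D)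
    (hx : x ∈ A ∪ B) (hy : y ∈ A ∪ B) (hxy : κ x = κ y) (hd : dist x y ≤ s) :
    mergeLabel A B κ r r' s x = mergeLabel A B κ r r' s y := by
  have hDs : 0 ≤ D + s := by positivity
  have eq_of_mem_A {x y : α} {b : α} (h : IsAnchor A B κ r s x b) (hy : y ∈ A) (hxy : κ x = κ y)
      (hd : dist x y ≤ s) : mergeLabel A B κ r r' s x = mergeLabel A B κ r r' s y := by
    obtain ⟨b', hx', hy'⟩ := h.exists_of_dist_le hA hy hxy hd
    rw [hx'.mergeLabel_eq hA hB hDs, hy'.mergeLabel_eq hA hB hDs]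
  rcases hx, hy with ⟨hx | hx, hy | hy⟩
  · by_cases hxb : ∃ b, IsAnchor A B κ r s x b
    · exact eq_of_mem_A hxb.choose_spec hy hxy hd
    by_cases hyb : ∃ b, IsAnchor A B κ r s y b
    · exact (eq_of_mem_A hyb.choose_spec hx hxy.symm (dist_comm x y ▸ hd)).symm
    rw [mergeLabel_of_not_isAnchor (not_exists.1 hxb),
      mergeLabel_of_not_isAnchor (not_exists.1 hyb)]
    exact congrArg _ (Quotient.sound (hA.rel_of_le x hx y hy hxy hd))
  · exact (eq_of_mem_A (isAnchor_self hy) hx hxy.symm (dist_comm x y ▸ hd)).symm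
  · exact eq_of_mem_A (isAnchor_self hx) hy hxy hd
  · rw [(isAnchor_self hx).mergeLabel_eq hA hB hDs, (isAnchor_self hy).mergeLabel_eq hA hB hDs]
    exact congrArg _ (Quotient.sound (hB.rel_of_le x hx y hy hxy (by linarith)))

theorem dist_le_of_mergeLabel_eq (hA : IsSeparatedColoring dist A κ r s D)
    (hB : IsSeparatedColoring dist B κ r' (2 * (D + s)) D') (hs : 0 ≤ s) (hD : 0 ≤ D)
    (hD' : 0 ≤ D') (hx : x ∈ A ∪ B) (hy : y ∈ A ∪ B)
    (hxy : mergeLabel A B κ r r' s x = mergeLabel A B κ r r' s y) :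
    dist x y ≤ 2 * (D + s) + D' := by
  have hDs : 0 ≤ D + s := by positivity
  by_cases hxb : ∃ b, IsAnchor A B κ r s x b <;> by_cases hyb : ∃ b, IsAnchor A B κ r s y b
  · obtain ⟨b, hxb⟩ := hxb
    obtain ⟨b', hyb⟩ := hyb
    rw [hxb.mergeLabel_eq hA hB hDs, hyb.mergeLabel_eq hA hB hDs, Sum.inl.injEq] at hxy
    linarith [dist_triangle4_right x y b b', hxb.dist_le hA hDs, hyb.dist_le hA hDs,
      hB.le_of_rel b hxb.mem b' hyb.mem (Quotient.exact hxy)]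
  · rw [hxb.choose_spec.mergeLabel_eq hA hB hDs,
      mergeLabel_of_not_isAnchor (not_exists.1 hyb)] at hxy
    cases hxy
  · rw [hyb.choose_spec.mergeLabel_eq hA hB hDs,
      mergeLabel_of_not_isAnchor (not_exists.1 hxb)] at hxy
    cases hxy
  · rw [mergeLabel_of_not_isAnchor (not_exists.1 hxb),
      mergeLabel_of_not_isAnchor (not_exists.1 hyb), Sum.inr.injEq] at hxy
    have hxA : x ∈ A := hx.resolve_right fun h => hxb ⟨x, isAnchor_self h⟩
    have hyA : y ∈ A := hy.resolve_right fun h => hyb ⟨y, isAnchor_self h⟩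
    linarith [hA.le_of_rel x hxA y hyA (Quotient.exact hxy)]

theorem IsSeparatedColoring.union (hA : IsSeparatedColoring dist A κ r s D)
    (hB : IsSeparatedColoring dist B κ r' (2 * (D + s)) D') (hs : 0 ≤ s) (hD : 0 ≤ D)
    (hD' : 0 ≤ D') :
    IsSeparatedColoring dist (A ∪ B) κ (Setoid.ker (mergeLabel A B κ r r' s)) s
      (2 * (D + s) + D') where
  rel_of_le _ hx _ hy := mergeLabel_eq_of_dist_le hA hB hs hD hx hy
  le_of_rel _ hx _ hy := dist_le_of_mergeLabel_eq hA hB hs hD hD' hx hy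

theorem HasNagataColoring.union {n : ℕ} (hA : HasNagataColoring n dist A)
    (hB : HasNagataColoring n dist B) : HasNagataColoring n dist (A ∪ B) := by
  classical
  obtain ⟨c, hc, hA⟩ := hA
  obtain ⟨c', hc', hB⟩ := hB
  refine ⟨2 * (c + 1) + c' * (2 * (c + 1)), by positivity, fun s hs => ?_⟩
  obtain ⟨κ, r, hκ⟩ := hA s hs
  obtain ⟨κ', r', hκ'⟩ := hB (2 * (c * s + s)) (by positivity)
  have hκA : IsSeparatedColoring dist A (A.piecewise κ κ') r s (c * s) :=
    hκ.congr (A.piecewise_eqOn κ κ').symm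
  have hκB : IsSeparatedColoring dist (B \ A) (A.piecewise κ κ') r' (2 * (c * s + s))
      (c' * (2 * (c * s + s))) :=
    (hκ'.mono sdiff_subset).congr fun x hx => (A.piecewise_eq_of_notMem κ κ' hx.2).symm
  have hunion := hκA.union hκB hs.le (by positivity) (by positivity)
  rw [union_sdiff_self] at hunion
  exact ⟨_, _, by convert hunion using 1; ring⟩

theorem nagataDim_union : nagataDim (A ∪ B) = max (nagataDim A) (nagataDim B) := by
  refine le_antisymm (le_of_forall_ge fun N hN => ?_)
    (max_le (nagataDim_mono subset_union_left) (nagataDim_mono subset_union_right))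
  induction N using ENat.recTopCoe with
  | top => exact le_top
  | coe n =>
    rw [max_le_iff, nagataDim_le_iff, nagataDim_le_iff] at hN
    exact nagataDim_le_iff.2 (hN.1.union hN.2)

end Union

end NagataDim

section Annuli

variable {α ι : Type*} [LinearOrder ι] {n : ℕ} {d d' : α → α → ℝ} {X : Set α} {k : α → ι}
  {A B : ι → ℝ} {K C : ℝ}

/-- A distance that is a multiple of `d` on each annulus `{x | k x = i}`, up to a bounded factor,
inherits colorings from `d`, provided that distinct annuli are far apart: at scale `s`, all annuli
of size at most `s` form a single piece. -/
theorem HasNagataColoring.of_annuli (h : HasNagataColoring n d X) (hA : ∀ i, 0 < A i)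
    (hB : Monotone B) (hK : 0 < K) (hC : 0 < C)
    (hlower : ∀ x ∈ X, ∀ y ∈ X, k x = k y → A (k x) * d x y ≤ d' x y)
    (hupper : ∀ x ∈ X, ∀ y ∈ X, k x = k y → d' x y ≤ K * (A (k x) * d x y))
    (hsep : ∀ x ∈ X, ∀ y ∈ X, k x ≠ k y → B (max (k x) (k y)) ≤ d' x y)
    (hdiam : ∀ x ∈ X, ∀ y ∈ X, d' x y ≤ C * B (max (k x) (k y))) :
    HasNagataColoring n d' X := by
  classical
  obtain ⟨c, hc, h⟩ := h
  refine ⟨C + K * c, by positivity, fun s hs => ?_⟩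
  choose κ r hκ using fun i => h (s / A i) (div_pos hs (hA i))
  let label (x : α) : Option (ι × Set α) :=
    if B (k x) ≤ s then none else some (k x, {y | r (k x) x y})
  refine ⟨fun x => if B (k x) ≤ s then 0 else κ (k x) x, Setoid.ker label,
    fun x hx y hy hxy hd => ?_, fun x hx y hy hxy => ?_⟩
  · rw [Setoid.ker_def]
    simp only [label]
    by_cases hk : k x = k y
    · by_cases hsmall : B (k y) ≤ s
      · simp only [hk, if_pos hsmall]
      simp only [hk, if_neg hsmall] at hxy ⊢
      have hrel : r (k y) x y := (hκ (k y)).rel_of_le x hx y hy hxy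
        ((le_div_iff₀' (hA _)).2 (hk ▸ (hlower x hx y hy hk).trans hd))
      refine congrArg some (Prod.ext rfl (Set.ext fun z => ?_))
      change r (k x) x z ↔ r (k y) y z
      rw [hk]
      exact ⟨(r (k y)).trans ((r (k y)).symm hrel), (r (k y)).trans hrel⟩
    · have hmax := (hsep x hx y hy hk).trans hd
      rw [if_pos ((hB (le_max_left _ _)).trans hmax), if_pos ((hB (le_max_right _ _)).trans hmax)]
  · rw [Setoid.ker_def] at hxy
    simp only [label] at hxy
    by_cases hxs : B (k x) ≤ s <;> by_cases hys : B (k y) ≤ s <;> simp only [hxs, hys, if_true,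
      if_false, reduceCtorEq, Option.some.injEq, Prod.mk.injEq] at hxy
    · have hmax : B (max (k x) (k y)) ≤ s := by rw [hB.map_max]; exact max_le hxs hys
      nlinarith [hdiam x hx y hy, mul_le_mul_of_nonneg_left hmax hC.le, mul_pos (mul_pos hK hc) hs]
    · have hrel : r (k x) x y := by
        change y ∈ {z | r (k x) x z}
        rw [hxy.2]
        exact (r (k y)).refl y
      have hdist := (hκ (k x)).le_of_rel x hx y hy hrel
      rw [← mul_div_assoc, le_div_iff₀' (hA _)] at hdist
      nlinarith [hupper x hx y hy hxy.1, mul_le_mul_of_nonneg_left hdist hK.le, mul_pos hC hs]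

theorem hasNagataColoring_iff_of_annuli {B' : ι → ℝ} {C' : ℝ} (hA : ∀ i, 0 < A i)
    (hB : Monotone B) (hB' : Monotone B') (hK : 0 < K) (hC : 0 < C) (hC' : 0 < C')
    (hlower : ∀ x ∈ X, ∀ y ∈ X, k x = k y → A (k x) * d x y ≤ d' x y)
    (hupper : ∀ x ∈ X, ∀ y ∈ X, k x = k y → d' x y ≤ K * (A (k x) * d x y))
    (hsep : ∀ x ∈ X, ∀ y ∈ X, k x ≠ k y → B (max (k x) (k y)) ≤ d x y)
    (hdiam : ∀ x ∈ X, ∀ y ∈ X, d x y ≤ C * B (max (k x) (k y)))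
    (hsep' : ∀ x ∈ X, ∀ y ∈ X, k x ≠ k y → B' (max (k x) (k y)) ≤ d' x y)
    (hdiam' : ∀ x ∈ X, ∀ y ∈ X, d' x y ≤ C' * B' (max (k x) (k y))) :
    HasNagataColoring n d X ↔ HasNagataColoring n d' X := by
  have hKA (i : ι) : 0 < K * A i := mul_pos hK (hA i)
  refine ⟨fun h => h.of_annuli hA hB' hK hC' hlower hupper hsep' hdiam',
    fun h => h.of_annuli (A := fun i => (K * A i)⁻¹) (fun i => inv_pos.2 (hKA i)) hB hK hC
      (fun x hx y hy hxy => ?_) (fun x hx y hy hxy => ?_) hsep hdiam⟩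
  · rw [inv_mul_le_iff₀ (hKA _), mul_assoc]
    exact hupper x hx y hy hxy
  · rw [mul_inv, mul_assoc, mul_inv_cancel_left₀ hK.ne', le_inv_mul_iff₀ (hA _)]
    exact hlower x hx y hy hxy

end Annuli

section PreservesNagataDimOn

variable {α β : Type*} [PseudoMetricSpace α] [PseudoMetricSpace β] {f : α → β} {S T : Set α}

/-- `f` preserves the Nagata dimension of every subset of `S`. -/
def PreservesNagataDimOn (f : α → β) (S : Set α) : Prop :=
  ∀ X ⊆ S, nagataDim (f '' X) = nagataDim X

theorem PreservesNagataDimOn.mono (h : PreservesNagataDimOn f T) (hST : S ⊆ T) :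
    PreservesNagataDimOn f S :=
  fun X hX => h X (hX.trans hST)

theorem PreservesNagataDimOn.union (hS : PreservesNagataDimOn f S)
    (hT : PreservesNagataDimOn f T) : PreservesNagataDimOn f (S ∪ T) := fun X hX => by
  rw [← inter_eq_left.2 hX, inter_union_distrib_left, image_union, nagataDim_union,
    nagataDim_union, hS _ inter_subset_right, hT _ inter_subset_right]

theorem preservesNagataDimOn_of_subsingleton (h : S.Subsingleton) : PreservesNagataDimOn f S :=
  fun _ hX => by
    rw [nagataDim_eq_zero_of_subsingleton ((h.anti hX).image f),
      nagataDim_eq_zero_of_subsingleton (h.anti hX)]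

theorem two_zpow_max_log_le {a b : ℝ} (ha : 0 < a) (hb : 0 < b) :
    (2 : ℝ) ^ max (Int.log 2 a) (Int.log 2 b) ≤ max a b := by
  rw [(zpow_right_mono₀ one_le_two).map_max]
  exact max_le_max (mod_cast Int.zpow_log_le_self one_lt_two ha)
    (mod_cast Int.zpow_log_le_self one_lt_two hb)

theorem max_lt_two_mul_two_zpow_max_log (a b : ℝ) :
    max a b < 2 * 2 ^ max (Int.log 2 a) (Int.log 2 b) := by
  have lt_two_mul (a : ℝ) : a < 2 * 2 ^ Int.log 2 a := by
    rw [mul_comm, ← zpow_add_one₀ two_ne_zero]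
    exact mod_cast Int.lt_zpow_succ_log_self one_lt_two a
  rw [(zpow_right_mono₀ one_le_two).map_max, mul_max_of_nonneg _ _ zero_le_two]
  exact max_lt_max (lt_two_mul a) (lt_two_mul b)

theorem two_zpow_max_log_le_two_mul_abs_sub {a b : ℝ} (ha : 0 < a) (hb : 0 < b)
    (heven : Even (Int.log 2 a - Int.log 2 b)) (hne : Int.log 2 a ≠ Int.log 2 b) :
    (2 : ℝ) ^ max (Int.log 2 a) (Int.log 2 b) ≤ 2 * |a - b| := by
  wlog hlt : Int.log 2 a < Int.log 2 b generalizing a b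
  · rw [max_comm, abs_sub_comm]
    exact this hb ha (by rwa [← neg_sub, even_neg]) hne.symm (hne.lt_or_gt.resolve_left hlt)
  have hgap : Int.log 2 a + 1 + 1 ≤ Int.log 2 b := by
    obtain ⟨i, hi⟩ := heven
    omega
  have ha' : a < 2 ^ (Int.log 2 a + 1) := mod_cast Int.lt_zpow_succ_log_self one_lt_two a
  have hb' : (2 : ℝ) ^ Int.log 2 b ≤ b := mod_cast Int.zpow_log_le_self one_lt_two hb
  have hab := (zpow_le_zpow_iff_right₀ (one_lt_two (α := ℝ))).2 hgap
  rw [zpow_add_one₀ two_ne_zero] at hab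
  rw [max_eq_right hlt.le]
  linarith [neg_abs_le (a - b)]

section Comparable

variable {z₀ : α} {e : ℕ} {c C : ℝ}

theorem nagataDim_image_eq_of_annuli {ι : Type*} [LinearOrder ι] {k : α → ι} {N : ι → ℝ}
    {δ D : ℝ} (hN : ∀ i, 0 < N i) (hmono : Monotone N) (hδ : 0 < δ) (hD : 0 < D) (hc : 0 < c)
    (hC : 0 < C) (hsep : ∀ x ∈ S, ∀ y ∈ S, k x ≠ k y → δ * N (max (k x) (k y)) ≤ dist x y)
    (hdiam : ∀ x ∈ S, ∀ y ∈ S, dist x y ≤ D * N (max (k x) (k y)))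
    (hlower : ∀ x ∈ S, ∀ y ∈ S, c * (dist x y * N (max (k x) (k y)) ^ e) ≤ dist (f x) (f y))
    (hupper : ∀ x ∈ S, ∀ y ∈ S, dist (f x) (f y) ≤ C * (dist x y * N (max (k x) (k y)) ^ e)) :
    nagataDim (f '' S) = nagataDim S := by
  have hN' (i : ι) : 0 ≤ N i := (hN i).le
  refine nagataDim_eq_nagataDim_iff.2 fun n => (hasNagataColoring_image_iff dist f S).trans
    (hasNagataColoring_iff_of_annuli (k := k) (A := fun i => c * N i ^ e) (K := C / c)
      (B := fun i => δ * N i) (C := D / δ) (B' := fun i => c * (δ * N i * N i ^ e))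
      (C' := D / δ * (C / c)) (fun i => mul_pos hc (pow_pos (hN i) e))
      (hmono.const_mul hδ.le) (fun i j hij => ?_) (by positivity) (by positivity) (by positivity)
      (fun x hx y hy hxy => ?_) (fun x hx y hy hxy => ?_) hsep (fun x hx y hy => ?_)
      (fun x hx y hy hxy => ?_) fun x hx y hy => ?_).symm
  · have := hmono hij
    have := hN' i
    have := hN' j
    dsimp only
    gcongr
  · convert hlower x hx y hy using 1
    rw [← hxy, max_self]
    ring
  · convert hupper x hx y hy using 1
    rw [← hxy, max_self]
    field_simp
  · convert hdiam x hx y hy using 1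
    field_simp
  · refine le_trans ?_ (hlower x hx y hy)
    have := hN' (max (k x) (k y))
    gcongr
    exact hsep x hx y hy hxy
  · calc dist (f x) (f y) ≤ C * (dist x y * N (max (k x) (k y)) ^ e) := hupper x hx y hy
      _ ≤ C * (D * N (max (k x) (k y)) * N (max (k x) (k y)) ^ e) := by
        have := hN' (max (k x) (k y))
        gcongr
        exact hdiam x hx y hy
      _ = D / δ * (C / c) * (c * (δ * N (max (k x) (k y)) * N (max (k x) (k y)) ^ e)) := by
        field_simp

/-- The annuli are those with radii in `[2 ^ i, 2 ^ (i + 1))`. -/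
theorem preservesNagataDimOn_of_comparable_of_even (hc : 0 < c) (hC : 0 < C)
    (hS : ∀ z ∈ S, 0 < dist z z₀)
    (heven : ∀ z ∈ S, ∀ w ∈ S, Even (Int.log 2 (dist z z₀) - Int.log 2 (dist w z₀)))
    (hlower : ∀ z ∈ S, ∀ w ∈ S,
      c * (dist z w * max (dist z z₀) (dist w z₀) ^ e) ≤ dist (f z) (f w))
    (hupper : ∀ z ∈ S, ∀ w ∈ S,
      dist (f z) (f w) ≤ C * (dist z w * max (dist z z₀) (dist w z₀) ^ e)) :
    PreservesNagataDimOn f S := by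
  intro X hX
  have hpos (x) (hx : x ∈ X) : 0 < dist x z₀ := hS x (hX hx)
  have hlt (x y : α) := (max_lt_two_mul_two_zpow_max_log (dist x z₀) (dist y z₀)).le
  refine nagataDim_image_eq_of_annuli (k := fun z => Int.log 2 (dist z z₀)) (e := e)
    (N := fun i => 2 ^ i) (δ := 1 / 2) (D := 4) (C := C * 2 ^ e) (fun i => by positivity)
    (zpow_right_mono₀ one_le_two) (by norm_num) (by norm_num) hc (by positivity)
    (fun x hx y hy hxy => ?_) (fun x _ y _ => ?_) (fun x hx y hy => ?_) fun x hx y hy => ?_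
  · linarith [abs_dist_sub_le x y z₀, two_zpow_max_log_le_two_mul_abs_sub (hpos x hx)
      (hpos y hy) (heven x (hX hx) y (hX hy)) hxy]
  · linarith [dist_triangle_right x y z₀, hlt x y, le_max_left (dist x z₀) (dist y z₀),
      le_max_right (dist x z₀) (dist y z₀)]
  · refine le_trans ?_ (hlower x (hX hx) y (hX hy))
    gcongr
    exact two_zpow_max_log_le (hpos x hx) (hpos y hy)
  · refine (hupper x (hX hx) y (hX hy)).trans ?_
    rw [mul_assoc C, mul_left_comm (2 ^ e), ← mul_pow]
    gcongr
    exact hlt x y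

theorem preservesNagataDimOn_of_comparable {α : Type*} [MetricSpace α] {f : α → β} {S : Set α}
    {z₀ : α} (hc : 0 < c) (hC : 0 < C)
    (hlower : ∀ z ∈ S, ∀ w ∈ S,
      c * (dist z w * max (dist z z₀) (dist w z₀) ^ e) ≤ dist (f z) (f w))
    (hupper : ∀ z ∈ S, ∀ w ∈ S,
      dist (f z) (f w) ≤ C * (dist z w * max (dist z z₀) (dist w z₀) ^ e)) :
    PreservesNagataDimOn f S := by
  have preserves_parity (P : ℤ → Prop) (hP : ∀ i j, P i → P j → Even (i - j)) :
      PreservesNagataDimOn f {z ∈ S | 0 < dist z z₀ ∧ P (Int.log 2 (dist z z₀))} :=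
    preservesNagataDimOn_of_comparable_of_even hc hC (fun z hz => hz.2.1)
      (fun z hz w hw => hP _ _ hz.2.2 hw.2.2) (fun z hz w hw => hlower z hz.1 w hw.1)
      fun z hz w hw => hupper z hz.1 w hw.1
  refine (((preserves_parity Even fun i j hi hj => hi.sub hj).union
    (preserves_parity Odd fun i j hi hj => hi.sub_odd hj)).union
    (preservesNagataDimOn_of_subsingleton (subsingleton_singleton (a := z₀)))).mono fun z hz => ?_
  rcases eq_or_ne z z₀ with rfl | hne
  · exact .inr rfl
  · exact .inl ((Int.even_or_odd _).imp (fun h => ⟨hz, dist_pos.2 hne, h⟩)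
      fun h => ⟨hz, dist_pos.2 hne, h⟩)

end Comparable

end PreservesNagataDimOn

section PowerLike

variable {k : ℕ} {a z₀ : ℂ} {f : ℂ → ℂ}

theorem exists_nhds_lt_re_inv_pow_mul (k : ℕ) {θ : ℂ} (hθ : θ ≠ 0) :
    ∃ V ∈ 𝓝 θ, ∀ x ∈ V, ∀ y ∈ V, ∀ i ∈ Finset.range (k + 1),
      1 / 2 < ((θ ^ k)⁻¹ * (x ^ i * y ^ (k - i))).re := by
  refine eventually_prod_self_iff.1 ((Filter.eventually_all_finset _).2 fun i hi => ?_)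
  rw [← nhds_prod_eq]
  have hcont : Continuous fun p : ℂ × ℂ => ((θ ^ k)⁻¹ * (p.1 ^ i * p.2 ^ (k - i))).re := by
    fun_prop
  refine hcont.continuousAt.eventually_const_lt ?_
  dsimp only
  rw [← pow_add, Nat.add_sub_cancel' (Finset.mem_range_succ_iff.1 hi),
    inv_mul_cancel₀ (pow_ne_zero k hθ), Complex.one_re]
  norm_num

theorem max_pow_le_geom_sum {r s : ℝ} (hr : 0 ≤ r) (hs : 0 ≤ s) (k : ℕ) :
    max r s ^ k ≤ ∑ i ∈ Finset.range (k + 1), r ^ i * s ^ (k - i) := by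
  have single_le (i : ℕ) (hi : i ∈ Finset.range (k + 1)) :=
    Finset.single_le_sum (f := fun i => r ^ i * s ^ (k - i)) (fun i _ => by positivity) hi
  rcases max_choice r s with h | h <;> rw [h]
  · simpa using single_le k (by simp)
  · simpa using single_le 0 (by simp)

theorem exists_nhds_max_pow_le_norm_geom_sum (k : ℕ) {θ : ℂ} (hθ : ‖θ‖ = 1) :
    ∃ V ∈ 𝓝 θ, ∀ x ∈ V, ∀ y ∈ V, ∀ r s : ℝ, 0 ≤ r → 0 ≤ s →
      max r s ^ k / 2 ≤ ‖∑ i ∈ Finset.range (k + 1), (r * x) ^ i * (s * y) ^ (k - i)‖ := by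
  obtain ⟨V, hV, hre⟩ := exists_nhds_lt_re_inv_pow_mul k (norm_ne_zero_iff.1 (hθ ▸ one_ne_zero))
  refine ⟨V, hV, fun x hx y hy r s hr hs => ?_⟩
  calc max r s ^ k / 2 ≤ ∑ i ∈ Finset.range (k + 1), r ^ i * s ^ (k - i) * (1 / 2) := by
        rw [← Finset.sum_mul]
        linarith [max_pow_le_geom_sum hr hs k]
    _ ≤ ∑ i ∈ Finset.range (k + 1), r ^ i * s ^ (k - i) *
          ((θ ^ k)⁻¹ * (x ^ i * y ^ (k - i))).re := by
        gcongr with i hi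
        exact (hre x hx y hy i hi).le
    _ = ((θ ^ k)⁻¹ * ∑ i ∈ Finset.range (k + 1), (r * x) ^ i * (s * y) ^ (k - i)).re := by
        rw [Finset.mul_sum, Complex.re_sum]
        refine Finset.sum_congr rfl fun i _ => ?_
        rw [← Complex.re_ofReal_mul]
        push_cast
        ring_nf
    _ ≤ ‖(θ ^ k)⁻¹ * ∑ i ∈ Finset.range (k + 1), (r * x) ^ i * (s * y) ^ (k - i)‖ :=
        Complex.re_le_norm _
    _ = ‖∑ i ∈ Finset.range (k + 1), (r * x) ^ i * (s * y) ^ (k - i)‖ := by simp [hθ]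

theorem norm_pow_succ_sub_pow_succ_le {R : Type*} [SeminormedCommRing R] [NormOneClass R]
    (k : ℕ) (u v : R) :
    ‖u ^ (k + 1) - v ^ (k + 1)‖ ≤ (k + 1) * (‖u - v‖ * max ‖u‖ ‖v‖ ^ k) := by
  have term_le (i : ℕ) (hi : i ∈ Finset.range (k + 1)) :
      ‖u ^ i * v ^ (k - i)‖ ≤ max ‖u‖ ‖v‖ ^ k :=
    calc ‖u ^ i * v ^ (k - i)‖ ≤ ‖u‖ ^ i * ‖v‖ ^ (k - i) :=
          (norm_mul_le _ _).trans (by gcongr <;> exact norm_pow_le _ _)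
      _ ≤ max ‖u‖ ‖v‖ ^ i * max ‖u‖ ‖v‖ ^ (k - i) := by
          gcongr
          exacts [le_max_left _ _, le_max_right _ _]
      _ = max ‖u‖ ‖v‖ ^ k := by
          rw [← pow_add, Nat.add_sub_cancel' (Finset.mem_range_succ_iff.1 hi)]
  rw [← geom_sum₂_mul]
  calc ‖(∑ i ∈ Finset.range (k + 1), u ^ i * v ^ (k + 1 - 1 - i)) * (u - v)‖
      ≤ ((k + 1 : ℕ) * max ‖u‖ ‖v‖ ^ k) * ‖u - v‖ := by
        refine (norm_mul_le _ _).trans (mul_le_mul_of_nonneg_right ?_ (norm_nonneg _))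
        rw [← nsmul_eq_mul]
        exact (norm_sum_le_of_le _ term_le).trans_eq (by simp)
    _ = (k + 1) * (‖u - v‖ * max ‖u‖ ‖v‖ ^ k) := by push_cast; ring

/-- The union of the rays issuing from `z₀` whose directions lie in `V`. -/
def sector (z₀ : ℂ) (V : Set ℂ) : Set ℂ := {z | ∃ x ∈ V, z - z₀ = dist z z₀ * x}

theorem sector_sphere (z₀ : ℂ) : sector z₀ (sphere 0 1) = univ :=
  eq_univ_of_forall fun z => ⟨Complex.exp ((z - z₀).arg * Complex.I),
    by simp [Complex.norm_exp_ofReal_mul_I], by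
      rw [Complex.dist_eq, Complex.norm_mul_exp_arg_mul_I]⟩

theorem exists_nhds_le_norm_pow_succ_sub_pow_succ (k : ℕ) (z₀ : ℂ) {θ : ℂ} (hθ : ‖θ‖ = 1) :
    ∃ V ∈ 𝓝 θ, ∀ z ∈ sector z₀ V, ∀ w ∈ sector z₀ V,
      dist z w * max (dist z z₀) (dist w z₀) ^ k ≤
        2 * ‖(z - z₀) ^ (k + 1) - (w - z₀) ^ (k + 1)‖ := by
  obtain ⟨V, hV, hle⟩ := exists_nhds_max_pow_le_norm_geom_sum k hθ
  refine ⟨V, hV, fun z ⟨x, hx, hzx⟩ w ⟨y, hy, hwy⟩ => ?_⟩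
  have hsum := hle x hx y hy (dist z z₀) (dist w z₀) dist_nonneg dist_nonneg
  rw [← hzx, ← hwy] at hsum
  rw [← geom_sum₂_mul, norm_mul, sub_sub_sub_cancel_right, ← dist_eq_norm z]
  simp only [Nat.add_sub_cancel]
  nlinarith [mul_le_mul_of_nonneg_left hsum (dist_nonneg (x := z) (y := w))]

/-- `f` behaves like `a * (z - z₀) ^ (k + 1)` on every disk around `z₀` with radius in `T`, in the
sense that the derivatives differ by little compared with the maximum of `|a * (z - z₀) ^ k|`. -/
def IsPowerLike (f : ℂ → ℂ) (z₀ a : ℂ) (k : ℕ) (T : Set ℝ) : Prop :=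
  ∀ M ∈ T, ∀ z ∈ closedBall z₀ M, DifferentiableAt ℂ f z ∧
    ‖deriv f z - (k + 1) * a * (z - z₀) ^ k‖ ≤ ‖a‖ / 4 * M ^ k

theorem IsPowerLike.norm_sub_sub_le {T : Set ℝ} (h : IsPowerLike f z₀ a k T) {z w : ℂ}
    (hM : max (dist z z₀) (dist w z₀) ∈ T) :
    ‖f z - f w - a * ((z - z₀) ^ (k + 1) - (w - z₀) ^ (k + 1))‖ ≤
      ‖a‖ / 4 * (dist z w * max (dist z z₀) (dist w z₀) ^ k) := by
  set M := max (dist z z₀) (dist w z₀)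
  have hpow (u : ℂ) : HasDerivAt (fun u => a * (u - z₀) ^ (k + 1))
      ((k + 1) * a * (u - z₀) ^ k) u := by
    refine ((((hasDerivAt_id' u).sub_const z₀).fun_pow (k + 1)).const_mul a).congr_deriv ?_
    simp only [Nat.add_sub_cancel, Nat.cast_succ]
    ring
  have hderiv (u : ℂ) (hu : u ∈ closedBall z₀ M) :=
    (h M hM u hu).1.hasDerivAt.sub (hpow u)
  have hle := (convex_closedBall z₀ M).norm_image_sub_le_of_norm_hasDerivWithin_le
    (fun u hu => (hderiv u hu).hasDerivWithinAt) (fun u hu => (h M hM u hu).2)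
    (mem_closedBall.2 (le_max_right (dist z z₀) (dist w z₀)))
    (mem_closedBall.2 (le_max_left (dist z z₀) (dist w z₀)))
  rw [← dist_eq_norm z w] at hle
  calc ‖f z - f w - a * ((z - z₀) ^ (k + 1) - (w - z₀) ^ (k + 1))‖
      = ‖f z - a * (z - z₀) ^ (k + 1) - (f w - a * (w - z₀) ^ (k + 1))‖ := by ring_nf
    _ ≤ ‖a‖ / 4 * M ^ k * dist z w := hle
    _ = ‖a‖ / 4 * (dist z w * M ^ k) := by ring

theorem IsPowerLike.exists_nhds_preservesNagataDimOn {T : Set ℝ} (h : IsPowerLike f z₀ a k T)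
    (ha : a ≠ 0) {θ : ℂ} (hθ : ‖θ‖ = 1) :
    ∃ V ∈ 𝓝 θ, PreservesNagataDimOn f ({z | dist z z₀ ∈ T} ∩ sector z₀ V) := by
  obtain ⟨V, hV, hle⟩ := exists_nhds_le_norm_pow_succ_sub_pow_succ k z₀ hθ
  have ha' : 0 < ‖a‖ := norm_pos_iff.2 ha
  have hM (z w) (hz : dist z z₀ ∈ T) (hw : dist w z₀ ∈ T) :
      max (dist z z₀) (dist w z₀) ∈ T := by
    rcases max_choice (dist z z₀) (dist w z₀) with h | h <;> rwa [h]
  refine ⟨V, hV, preservesNagataDimOn_of_comparable (z₀ := z₀) (e := k) (c := ‖a‖ / 4)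
    (C := ‖a‖ * (k + 1) + ‖a‖ / 4) (by positivity) (by positivity)
    (fun z hz w hw => ?_) fun z hz w hw => ?_⟩
  all_goals
    have hsub := h.norm_sub_sub_le (hM z w hz.1 hw.1)
    rw [dist_eq_norm (f z)]
  · have htri := norm_sub_norm_le (a * ((z - z₀) ^ (k + 1) - (w - z₀) ^ (k + 1))) (f z - f w)
    rw [norm_mul, norm_sub_rev _ (f z - f w)] at htri
    linarith [mul_le_mul_of_nonneg_left (hle z hz.2 w hw.2) ha'.le]
  · have htri := norm_sub_norm_le (f z - f w) (a * ((z - z₀) ^ (k + 1) - (w - z₀) ^ (k + 1)))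
    have hpow := norm_pow_succ_sub_pow_succ_le k (z - z₀) (w - z₀)
    rw [sub_sub_sub_cancel_right, ← dist_eq_norm z w, ← dist_eq_norm z z₀, ← dist_eq_norm w z₀]
      at hpow
    rw [norm_mul] at htri
    linarith [mul_le_mul_of_nonneg_left hpow ha'.le]

theorem IsPowerLike.preservesNagataDimOn {T : Set ℝ} (h : IsPowerLike f z₀ a k T) (ha : a ≠ 0) :
    PreservesNagataDimOn f {z | dist z z₀ ∈ T} := by
  rw [← inter_univ {z | dist z z₀ ∈ T}, ← sector_sphere z₀]
  refine (isCompact_sphere (0 : ℂ) 1).induction_on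
    (p := fun V => PreservesNagataDimOn f ({z | dist z z₀ ∈ T} ∩ sector z₀ V)) ?_ ?_ ?_ ?_
  · exact preservesNagataDimOn_of_subsingleton fun z hz => by simp [sector] at hz
  · exact fun V W hVW hW => hW.mono fun z ⟨hz, x, hx, hzx⟩ => ⟨hz, x, hVW hx, hzx⟩
  · refine fun V W hV hW => (hV.union hW).mono ?_
    rintro z ⟨hz, x, hx | hx, hzx⟩
    exacts [.inl ⟨hz, x, hx, hzx⟩, .inr ⟨hz, x, hx, hzx⟩]
  · intro θ hθ
    obtain ⟨V, hV, hpres⟩ := h.exists_nhds_preservesNagataDimOn ha (by simpa using hθ)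
    exact ⟨V, mem_nhdsWithin_of_mem_nhds hV, hpres⟩

/-- Near `z₀`, the derivative is `(z - z₀) ^ k * h z` with `h z₀ ≠ 0`. -/
theorem exists_nhds_preservesNagataDimOn (hf : AnalyticAt ℂ f z₀)
    (hne : ¬ ∀ᶠ z in 𝓝 z₀, deriv f z = 0) : ∃ U ∈ 𝓝 z₀, PreservesNagataDimOn f U := by
  obtain ⟨k, h, hh, hh0, hfh⟩ := hf.deriv.exists_eventuallyEq_pow_smul_nonzero_iff.2 hne
  have hk : (k + 1 : ℂ) ≠ 0 := mod_cast k.succ_ne_zero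
  have ha : h z₀ / (k + 1) ≠ 0 := div_ne_zero hh0 hk
  have hclose : ∀ᶠ z in 𝓝 z₀, dist (h z) (h z₀) < ‖h z₀ / (k + 1)‖ / 4 :=
    hh.continuousAt (ball_mem_nhds _ (div_pos (norm_pos_iff.2 ha) four_pos))
  obtain ⟨ε, hε, hball⟩ := Metric.eventually_nhds_iff.1
    (hclose.and (hfh.and hf.eventually_analyticAt))
  have hlike : IsPowerLike f z₀ (h z₀ / (k + 1)) k (Iio ε) := by
    intro M hM z hz
    obtain ⟨hz_close, hfz, hz_an⟩ := hball ((mem_closedBall.1 hz).trans_lt hM)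
    refine ⟨hz_an.differentiableAt, ?_⟩
    rw [hfz, mul_div_cancel₀ _ hk, smul_eq_mul, mul_comm (h z₀), ← mul_sub, norm_mul, norm_pow,
      mul_comm, ← dist_eq_norm, ← dist_eq_norm]
    gcongr
    exact hz
  exact ⟨_, ball_mem_nhds z₀ hε, hlike.preservesNagataDimOn ha⟩

end PowerLike

section PolynomialPreserves

variable {p : ℂ[X]}

theorem eventually_norm_eval_le_mul_pow {𝕜 : Type*} [NormedField 𝕜] {q : 𝕜[X]} {k : ℕ}
    (hq : q.degree < k) {ε : ℝ} (hε : 0 < ε) :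
    ∀ᶠ M : ℝ in atTop, ∀ z ∈ closedBall 0 M, ‖q.eval z‖ ≤ ε * M ^ k := by
  have hlt (i : ℕ) (hi : i ∈ q.support) : i < k :=
    Nat.cast_lt.1 ((Polynomial.le_degree_of_mem_supp i hi).trans_lt hq)
  have hsum : (fun M : ℝ => ∑ i ∈ q.support, ‖q.coeff i‖ * M ^ i) =o[atTop] fun M => M ^ k :=
    IsLittleO.fun_sum fun i hi => (isLittleO_pow_pow_atTop_of_lt (hlt i hi)).const_mul_left _
  filter_upwards [hsum.bound hε, eventually_ge_atTop 0] with M hM hM0 z hz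
  rw [mem_closedBall_zero_iff] at hz
  calc ‖q.eval z‖ ≤ ∑ i ∈ q.support, ‖q.coeff i * z ^ i‖ := by
        rw [Polynomial.eval_eq_sum]
        exact norm_sum_le _ _
    _ ≤ ∑ i ∈ q.support, ‖q.coeff i‖ * M ^ i := by
        gcongr with i
        rw [norm_mul, norm_pow]
        gcongr
    _ ≤ ε * M ^ k := by
        rw [Real.norm_of_nonneg (pow_nonneg hM0 k)] at hM
        exact (Real.le_norm_self _).trans hM

theorem degree_derivative_eraseLead_lt {R : Type*} [Semiring R] (p : R[X]) :
    p.eraseLead.derivative.degree < (p.natDegree - 1 : ℕ) := by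
  refine (Polynomial.degree_lt_iff_coeff_zero _ _).2 fun m hm => ?_
  rw [Polynomial.coeff_derivative, Polynomial.eraseLead_coeff]
  split_ifs with h
  · rw [zero_mul]
  · rw [Polynomial.coeff_eq_zero_of_natDegree_lt (by omega), zero_mul]

theorem exists_preservesNagataDimOn_compl_closedBall (hp : 1 ≤ p.natDegree) :
    ∃ R, PreservesNagataDimOn p.eval (closedBall 0 R)ᶜ := by
  have ha : p.leadingCoeff ≠ 0 := Polynomial.leadingCoeff_ne_zero.2 (by rintro rfl; simp at hp)
  have hclose := eventually_norm_eval_le_mul_pow (degree_derivative_eraseLead_lt p)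
    (div_pos (norm_pos_iff.2 ha) four_pos)
  obtain ⟨R, hR⟩ := eventually_atTop.1 hclose
  have hlike : IsPowerLike p.eval 0 p.leadingCoeff (p.natDegree - 1) (Ioi R) := by
    refine fun M hM z hz => ⟨p.differentiable z, ?_⟩
    have hsplit : p.derivative = p.eraseLead.derivative +
        Polynomial.C (p.leadingCoeff * p.natDegree) * Polynomial.X ^ (p.natDegree - 1) := by
      rw [← Polynomial.derivative_C_mul_X_pow, ← Polynomial.derivative_add,
        p.eraseLead_add_C_mul_X_pow]
    have hderiv : deriv p.eval z - (p.natDegree - 1 + 1 : ℂ) * p.leadingCoeff *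
        (z - 0) ^ (p.natDegree - 1) = p.eraseLead.derivative.eval z := by
      rw [p.deriv, hsplit, sub_zero, sub_add_cancel, Polynomial.eval_add,
        Polynomial.eval_C_mul, Polynomial.eval_X_pow]
      ring
    rw [Nat.cast_sub hp, Nat.cast_one, hderiv]
    exact hR M (le_of_lt hM) z hz
  refine ⟨R, (hlike.preservesNagataDimOn ha).mono fun z hz => ?_⟩
  simpa using hz

theorem exists_nhds_preservesNagataDimOn_eval (hp : 1 ≤ p.natDegree) (z₀ : ℂ) :
    ∃ U ∈ 𝓝 z₀, PreservesNagataDimOn p.eval U := by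
  refine exists_nhds_preservesNagataDimOn (p.differentiable.analyticAt z₀) fun hzero => ?_
  have hroot : {z | p.derivative.IsRoot z} ∈ 𝓝 z₀ := by
    filter_upwards [hzero] with z hz
    rwa [p.deriv] at hz
  have hderiv := Polynomial.eq_zero_of_infinite_isRoot _ (infinite_of_mem_nhds z₀ hroot)
  exact Nat.one_le_iff_ne_zero.1 hp (Polynomial.derivative_eq_zero.1 hderiv)

theorem preservesNagataDimOn_eval_univ (hp : 1 ≤ p.natDegree) :
    PreservesNagataDimOn p.eval univ := by
  obtain ⟨R, hR⟩ := exists_preservesNagataDimOn_compl_closedBall hp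
  rw [← union_compl_self (closedBall (0 : ℂ) R)]
  refine PreservesNagataDimOn.union ?_ hR
  refine (isCompact_closedBall (0 : ℂ) R).induction_on
    (preservesNagataDimOn_of_subsingleton subsingleton_empty)
    (fun U V hUV hV => hV.mono hUV) (fun U V hU hV => hU.union hV) fun z₀ _ => ?_
  obtain ⟨U, hU, hpres⟩ := exists_nhds_preservesNagataDimOn_eval hp z₀
  exact ⟨U, mem_nhdsWithin_of_mem_nhds hU, hpres⟩

end PolynomialPreserves

section DimensionZero

theorem nagataDim_ne_zero_of_isPreconnected_subset_closure {α : Type*} [MetricSpace α]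
    {X C : Set α} (hC : IsPreconnected C) (hnt : C.Nontrivial) (hCX : C ⊆ closure X) :
    nagataDim X ≠ 0 := by
  intro hX
  obtain ⟨c, hc, h⟩ := nagataDim_le_iff (n := 0).1 hX.le
  obtain ⟨p, hp, q, hq, hpq⟩ := hnt
  obtain ⟨s, hs, hsD⟩ : ∃ s : ℝ, 0 < s ∧ (c + 1) * s < dist p q :=
    ⟨dist p q / (c + 2), div_pos (dist_pos.2 hpq) (by positivity), by
      rw [mul_div_assoc', div_lt_iff₀ (by positivity)]
      nlinarith [dist_pos.2 hpq]⟩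
  obtain ⟨κ, r, hκ⟩ := h s hs
  obtain ⟨y₀, hy₀, hpy₀⟩ := mem_closure_iff.1 (hCX hp) (s / 2) (half_pos hs)
  let U := thickening (s / 2) {y ∈ X | r y₀ y}
  let V := thickening (s / 2) {y ∈ X | ¬ r y₀ y}
  have hcover : C ⊆ U ∪ V := by
    rw [← thickening_union, ← sep_or, sep_eq_self_iff_mem_true.2 fun y _ => em (r y₀ y)]
    exact hCX.trans (closure_subset_thickening (half_pos hs) X)
  have hdisj : Disjoint U V := by
    refine Set.disjoint_left.2 fun u huU huV => ?_
    obtain ⟨y, ⟨hy, hy₀y⟩, huy⟩ := mem_thickening_iff.1 huU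
    obtain ⟨y', ⟨hy', hy₀y'⟩, huy'⟩ := mem_thickening_iff.1 huV
    refine hy₀y' (r.trans hy₀y (hκ.rel_of_le y hy y' hy' (Subsingleton.elim (α := Fin 1) _ _) ?_))
    linarith [dist_triangle_left y y' u]
  have hpU : p ∈ U := mem_thickening_iff.2 ⟨y₀, ⟨hy₀, r.refl y₀⟩, hpy₀⟩
  have hCU : C ⊆ U :=
    hC.subset_left_of_subset_union isOpen_thickening isOpen_thickening hdisj hcover ⟨p, hp, hpU⟩
  obtain ⟨y, ⟨hy, hy₀y⟩, hqy⟩ := mem_thickening_iff.1 (hCU hq)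
  linarith [hκ.le_of_rel y₀ hy₀ y hy hy₀y, dist_triangle4_right p q y₀ y]

theorem nagataDim_ne_zero_of_dense {α : Type*} [MetricSpace α] [PreconnectedSpace α]
    [Nontrivial α] {X : Set α} (hX : Dense X) : nagataDim X ≠ 0 :=
  nagataDim_ne_zero_of_isPreconnected_subset_closure isPreconnected_univ nontrivial_univ
    hX.closure_eq.ge

theorem nagataDim_range_eq_zero_of_two_mul_norm_le {E : Type*} [SeminormedAddCommGroup E]
    {z : ℕ → E} (hz : ∀ n, 2 * ‖z n‖ ≤ ‖z (n + 1)‖) : nagataDim (range z) = 0 := by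
  classical
  have hmono : Monotone fun n => ‖z n‖ :=
    monotone_nat_of_le_succ fun n => by linarith [hz n, norm_nonneg (z n)]
  have norm_le {m n : ℕ} {s : ℝ} (hmn : m < n) (hd : dist (z m) (z n) ≤ s) : ‖z n‖ ≤ 2 * s := by
    rw [dist_eq_norm'] at hd
    linarith [hz m, hmono (Nat.succ_le_of_lt hmn), norm_sub_norm_le (z n) (z m)]
  let label (s : ℝ) (x : E) : Option E := if ‖x‖ ≤ 2 * s then none else some x
  refine nonpos_iff_eq_zero.1 (nagataDim_le_iff (n := 0).2 ⟨4, four_pos, fun s hs =>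
    ⟨fun _ => 0, Setoid.ker (label s), ?_, ?_⟩⟩)
  · rintro _ ⟨m, rfl⟩ _ ⟨n, rfl⟩ - hd
    wlog hmn : m ≤ n generalizing m n
    · exact Setoid.symm' _ (this n m (by rwa [dist_comm]) (le_of_not_ge hmn))
    rcases hmn.eq_or_lt with rfl | hmn
    · exact Setoid.refl' _ _
    · have hn := norm_le hmn hd
      exact (if_pos ((hmono hmn.le).trans hn)).trans (if_pos hn).symm
  · intro x _ y _ hxy
    rw [Setoid.ker_def] at hxy
    simp only [label] at hxy
    split_ifs at hxy with hx hy
    · linarith [dist_le_norm_add_norm x y]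
    · rw [Option.some.inj hxy, dist_self]
      positivity

theorem exists_two_mul_norm_le_denseRange_comp {E F : Type*} [SeminormedAddCommGroup E]
    [TopologicalSpace F] [SecondCountableTopology F] {f : E → F}
    (hf : ∀ S ∈ cobounded E, Dense (f '' S)) :
    ∃ z : ℕ → E, (∀ n, 2 * ‖z n‖ ≤ ‖z (n + 1)‖) ∧ DenseRange (f ∘ z) := by
  obtain ⟨b, hbc, hb0, hb⟩ := TopologicalSpace.exists_countable_basis F
  obtain ⟨V, rfl⟩ := hbc.exists_eq_range
    (let ⟨v, hv, _⟩ := hb.exists_subset_of_mem_open (mem_univ (f 0)) isOpen_univ; ⟨v, hv⟩)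
  have hV (n : ℕ) : (V n).Nonempty :=
    nonempty_iff_ne_empty.2 fun h => hb0 (h ▸ mem_range_self n)
  have hex (R : ℝ) (n : ℕ) : ∃ x, R ≤ ‖x‖ ∧ f x ∈ V n := by
    have hS : {x : E | R ≤ ‖x‖} ∈ cobounded E :=
      tendsto_norm_cobounded_atTop.eventually_ge_atTop R
    obtain ⟨_, hVn, x, hx, rfl⟩ :=
      (hf _ hS).inter_open_nonempty (V n) (hb.isOpen (mem_range_self n)) (hV n)
    exact ⟨x, hx, hVn⟩
  choose next hnext hmem using hex
  let z (n : ℕ) : E := n.rec (next 0 0) fun n x => next (2 * ‖x‖) (n + 1)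
  refine ⟨z, fun n => hnext _ _, hb.dense_iff.2 ?_⟩
  rintro _ ⟨n, rfl⟩ -
  exact ⟨f (z n), by cases n <;> exact hmem _ _, mem_range_self n⟩

end DimensionZero

section NonPolynomial

variable {f : ℂ → ℂ}

theorem exists_eq_eval_of_isLittleO_pow {n : ℕ} (hf : Differentiable ℂ f)
    (hn : f =o[cobounded ℂ] fun z => z ^ n) : ∃ p : ℂ[X], ∀ z, f z = p.eval z := by
  induction n generalizing f with
  | zero =>
    simp only [pow_zero, isLittleO_one_iff, cobounded_eq_cocompact] at hn
    exact ⟨0, fun z => by simpa using hf.apply_eq_of_tendsto_cocompact z hn⟩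
  | succ n ih =>
    have hdiff : Differentiable ℂ (dslope f 0) :=
      differentiableOn_univ.1 ((Complex.differentiableOn_dslope univ_mem).2 hf.differentiableOn)
    have hslope (z : ℂ) : z * dslope f 0 z = f z - f 0 := by
      simpa using sub_smul_dslope f 0 z
    have hconst : (fun _ : ℂ => f 0) =o[cobounded ℂ] fun z => z ^ (n + 1) := by
      simpa using (isLittleO_pow_pow_cobounded_of_lt n.succ_pos).const_mul_left (f 0)
    have hlittle : dslope f 0 =o[cobounded ℂ] fun z => z ^ n := by
      refine ((isBigO_refl Inv.inv _).mul_isLittleO (hn.sub hconst)).congr' ?_ ?_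
      · filter_upwards [eventually_ne_cobounded 0] with z hz
        rw [← hslope, inv_mul_cancel_left₀ hz]
      · filter_upwards [eventually_ne_cobounded 0] with z hz
        rw [pow_succ', inv_mul_cancel_left₀ hz]
    obtain ⟨p, hp⟩ := ih hdiff hlittle
    refine ⟨Polynomial.C (f 0) + Polynomial.X * p, fun z => ?_⟩
    simp [← hp, hslope]

/-- Away from `w` the function `(g - w)⁻¹` is bounded, so its singularity at `c` is removable. -/
theorem meromorphicAt_of_eventually_le_norm_sub {g : ℂ → ℂ} {c w : ℂ} {ε : ℝ} (hε : 0 < ε)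
    (hd : ∀ᶠ u in 𝓝[≠] c, DifferentiableAt ℂ g u) (hle : ∀ᶠ u in 𝓝[≠] c, ε ≤ ‖g u - w‖) :
    MeromorphicAt g c := by
  let h : ℂ → ℂ := fun u => (g u - w)⁻¹
  obtain ⟨U, hU, hUg⟩ := (eventually_nhdsWithin_iff.1 (hd.and hle)).exists_mem
  have hdiff : DifferentiableOn ℂ h (U \ {c}) := fun u hu =>
    (((hUg u hu.1 hu.2).1.sub_const w).inv
      (norm_pos_iff.1 (hε.trans_le (hUg u hu.1 hu.2).2))).differentiableWithinAt
  have hbdd : BddAbove (norm ∘ h '' (U \ {c})) := by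
    refine ⟨ε⁻¹, forall_mem_image.2 fun u hu => ?_⟩
    rw [Function.comp_apply, norm_inv]
    exact inv_anti₀ hε (hUg u hu.1 hu.2).2
  have hmero : MeromorphicAt h c :=
    ((Complex.differentiableOn_update_limUnder_of_bddAbove hU hdiff hbdd).analyticAt
      hU).meromorphicAt.congr <| by
        filter_upwards [self_mem_nhdsWithin] with u hu using Function.update_of_ne hu _ _
  exact (hmero.inv.add (MeromorphicAt.const w c)).congr (.of_forall fun u => by simp [h])

theorem exists_eq_eval_of_meromorphicAt_comp_inv (hf : Differentiable ℂ f)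
    (hmero : MeromorphicAt (fun u => f u⁻¹) 0) : ∃ p : ℂ[X], ∀ z, f z = p.eval z := by
  obtain ⟨n, hn⟩ := hmero
  have hbig : f =O[cobounded ℂ] fun z => z ^ n := by
    have hbdd := (hn.continuousAt.tendsto.isBigO_one ℂ).comp_tendsto tendsto_inv₀_cobounded
    refine ((isBigO_refl (fun z : ℂ => z ^ n) _).mul hbdd).congr' ?_ (.of_forall fun z => ?_)
    · filter_upwards [eventually_ne_cobounded 0] with z hz
      simp [hz]
    · simp
  exact exists_eq_eval_of_isLittleO_pow (n := n + 1) hf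
    (hbig.trans_isLittleO (isLittleO_pow_pow_cobounded_of_lt n.lt_succ_self))

theorem dense_image_of_mem_cobounded (hf : Differentiable ℂ f)
    (hpoly : ¬ ∃ p : ℂ[X], ∀ z, f z = p.eval z) {S : Set ℂ} (hS : S ∈ cobounded ℂ) :
    Dense (f '' S) := by
  refine Metric.dense_iff.2 fun w ε hε => ?_
  by_contra hempty
  refine hpoly (exists_eq_eval_of_meromorphicAt_comp_inv hf
    (meromorphicAt_of_eventually_le_norm_sub (w := w) hε ?_ ?_))
  · filter_upwards [self_mem_nhdsWithin] with u hu
    exact (hf _).comp u (differentiableAt_inv hu)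
  · filter_upwards [tendsto_inv₀_nhdsNE_zero.eventually_mem hS] with u hu
    refine le_of_not_gt fun hlt => hempty ⟨f u⁻¹, ?_, mem_image_of_mem f hu⟩
    rwa [mem_ball_iff_norm]

end NonPolynomial

/-- An entire function is a non-constant polynomial if and only if it
preserves the Nagata dimension of every subset of `ℂ`. -/
theorem entire_polynomial_iff_preserves_nagataDim (f : ℂ → ℂ) (hf : Differentiable ℂ f) :
    (∃ p : Polynomial ℂ, 1 ≤ p.natDegree ∧ ∀ z : ℂ, f z = p.eval z) ↔
      (∀ X : Set ℂ, nagataDim (f '' X) = nagataDim X) := by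
  constructor
  · rintro ⟨p, hp, hfp⟩ X
    obtain rfl : f = fun z => p.eval z := funext hfp
    exact preservesNagataDimOn_eval_univ hp X (subset_univ X)
  · intro h
    by_cases hpoly : ∃ p : ℂ[X], ∀ z, f z = p.eval z
    · obtain ⟨p, hp⟩ := hpoly
      refine ⟨p, Nat.one_le_iff_ne_zero.2 fun hdeg => ?_, hp⟩
      obtain ⟨a, rfl⟩ := Polynomial.natDegree_eq_zero.1 hdeg
      refine nagataDim_ne_zero_of_dense (dense_univ (X := ℂ)) ?_
      rw [← h]
      refine nagataDim_eq_zero_of_subsingleton ?_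
      rintro _ ⟨x, -, rfl⟩ _ ⟨y, -, rfl⟩
      rw [hp, hp, Polynomial.eval_C, Polynomial.eval_C]
    · obtain ⟨z, hz, hdense⟩ := exists_two_mul_norm_le_denseRange_comp fun _ =>
        dense_image_of_mem_cobounded hf hpoly
      refine absurd ((h (range z)).trans (nagataDim_range_eq_zero_of_two_mul_norm_le hz)) ?_
      exact nagataDim_ne_zero_of_dense (by rwa [← range_comp])
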